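/- arXiv:2202.03234 — 9 statements merged into one kernel-verified Lean document; each statement's English description precedes it below -/
import Mathlib

section
/- In the parent-space setup, the identification operator J = ι_∞* ∘ ι_n satisfies ‖J‖ ≤ 1, and each of the three quantities ‖(id_{H_n} − J* ∘ J) ∘ R_n‖, ‖(id_{H_∞} − J ∘ J*) ∘ R_∞‖ and ‖J ∘ R_n − R_∞ ∘ J‖ is bounded above by ‖D‖, the operator norm of Weidmann's lifted resolvent difference. (In particular, generalised norm resolvent convergence in the sense of Weidmann implies QUE-convergence with the same convergence speed.) -/
open ContinuousLinearMap

theorem norm_comp_comp_le_of_norm_le_one {E F H : Type*}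
    [NormedAddCommGroup E] [NormedSpace ℂ E] [NormedAddCommGroup F] [NormedSpace ℂ F]
    [NormedAddCommGroup H] [NormedSpace ℂ H] {A : H →L[ℂ] F} {B : E →L[ℂ] H}
    (hA : ‖A‖ ≤ 1) (hB : ‖B‖ ≤ 1) (D : H →L[ℂ] H) : ‖A ∘L D ∘L B‖ ≤ ‖D‖ :=
  calc ‖A ∘L D ∘L B‖ ≤ ‖A‖ * (‖D‖ * ‖B‖) :=
        (opNorm_comp_le _ _).trans (by gcongr; exact opNorm_comp_le _ _)
    _ ≤ 1 * (‖D‖ * 1) := by gcongr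
    _ = ‖D‖ := by ring

section Isometry

variable {E F H : Type*}
  [NormedAddCommGroup E] [InnerProductSpace ℂ E] [CompleteSpace E]
  [NormedAddCommGroup F] [InnerProductSpace ℂ F] [CompleteSpace F]
  [NormedAddCommGroup H] [InnerProductSpace ℂ H] [CompleteSpace H]

theorem norm_le_one_of_adjoint_comp_self_eq_id {ι : E →L[ℂ] H}
    (hι : adjoint ι ∘L ι = ContinuousLinearMap.id ℂ E) : ‖ι‖ ≤ 1 :=
  ι.opNorm_le_bound zero_le_one fun x => by
    rw [one_mul, (norm_map_iff_adjoint_comp_self ι).mpr hι x]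

theorem norm_adjoint_le_one_of_adjoint_comp_self_eq_id {ι : E →L[ℂ] H}
    (hι : adjoint ι ∘L ι = ContinuousLinearMap.id ℂ E) : ‖adjoint ι‖ ≤ 1 :=
  (LinearIsometryEquiv.norm_map adjoint ι).trans_le (norm_le_one_of_adjoint_comp_self_eq_id hι)

/-- The complementary projection to the range of an isometry is a contraction. -/
theorem norm_id_sub_comp_adjoint_le_one {ι : E →L[ℂ] H}
    (hι : adjoint ι ∘L ι = ContinuousLinearMap.id ℂ E) :
    ‖ContinuousLinearMap.id ℂ H - ι ∘L adjoint ι‖ ≤ 1 := by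
  refine opNorm_le_bound _ zero_le_one fun x => ?_
  have hadj : adjoint ι (ι (adjoint ι x)) = adjoint ι x := DFunLike.congr_fun hι (adjoint ι x)
  have horth : inner ℂ (x - ι (adjoint ι x)) (ι (adjoint ι x)) = 0 := by
    rw [← adjoint_inner_left, map_sub, hadj, sub_self, inner_zero_left]
  have hpyth := norm_add_sq_eq_norm_sq_add_norm_sq_of_inner_eq_zero _ _ horth
  rw [sub_add_cancel] at hpyth
  rw [one_mul]
  refine le_of_sq_le_sq ?_ (norm_nonneg x)
  change ‖x - ι (adjoint ι x)‖ ^ 2 ≤ ‖x‖ ^ 2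
  nlinarith [mul_self_nonneg ‖ι (adjoint ι x)‖]

/-- The defect of unitarity of the identification operator `adjoint κ ∘L ι`, composed with `R`,
is controlled by the difference of the lifts of `R` and of any `S`. -/
theorem norm_id_sub_comp_le_norm_lift_sub_lift {ι : E →L[ℂ] H} {κ : F →L[ℂ] H}
    (hι : adjoint ι ∘L ι = ContinuousLinearMap.id ℂ E)
    (hκ : adjoint κ ∘L κ = ContinuousLinearMap.id ℂ F) (R : E →L[ℂ] E) (S : F →L[ℂ] F) :
    ‖(ContinuousLinearMap.id ℂ E - (adjoint ι ∘L κ) ∘L (adjoint κ ∘L ι)) ∘L R‖ ≤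
      ‖ι ∘L R ∘L adjoint ι - κ ∘L S ∘L adjoint κ‖ := by
  have hι' (x : E) : adjoint ι (ι x) = x := DFunLike.congr_fun hι x
  have hκ' (x : F) : adjoint κ (κ x) = x := DFunLike.congr_fun hκ x
  have hfactor : (ContinuousLinearMap.id ℂ E - (adjoint ι ∘L κ) ∘L (adjoint κ ∘L ι)) ∘L R =
      (adjoint ι ∘L (ContinuousLinearMap.id ℂ H - κ ∘L adjoint κ)) ∘L
        (ι ∘L R ∘L adjoint ι - κ ∘L S ∘L adjoint κ) ∘L ι := by
    ext x
    simp [hι', hκ']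
  rw [hfactor]
  refine norm_comp_comp_le_of_norm_le_one ?_ (norm_le_one_of_adjoint_comp_self_eq_id hι) _
  exact (opNorm_comp_le _ _).trans <| mul_le_one₀
    (norm_adjoint_le_one_of_adjoint_comp_self_eq_id hι) (norm_nonneg _)
    (norm_id_sub_comp_adjoint_le_one hκ)

end Isometry

/-- Weidmann's convergence implies QUE-convergence (with the same speed):
in the parent-space setup, `J = ι∞* ∘ ιₙ` is a contraction and all three
QUE-quantities are bounded by the norm of the lifted resolvent difference `D`. -/
theorem weidmann_implies_que {Hn Hinf H : Type*}
    [NormedAddCommGroup Hn] [InnerProductSpace ℂ Hn] [CompleteSpace Hn]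
    [NormedAddCommGroup Hinf] [InnerProductSpace ℂ Hinf] [CompleteSpace Hinf]
    [NormedAddCommGroup H] [InnerProductSpace ℂ H] [CompleteSpace H]
    (ιn : Hn →L[ℂ] H) (ιinf : Hinf →L[ℂ] H)
    (hιn : (adjoint ιn) ∘L ιn = ContinuousLinearMap.id ℂ Hn)
    (hιinf : (adjoint ιinf) ∘L ιinf = ContinuousLinearMap.id ℂ Hinf)
    (Rn : Hn →L[ℂ] Hn) (Rinf : Hinf →L[ℂ] Hinf)
    (J : Hn →L[ℂ] Hinf) (D : H →L[ℂ] H)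
    (hJ : J = (adjoint ιinf) ∘L ιn)
    (hD : D = ιn ∘L Rn ∘L (adjoint ιn) - ιinf ∘L Rinf ∘L (adjoint ιinf)) :
    ‖J‖ ≤ 1 ∧
    ‖(ContinuousLinearMap.id ℂ Hn - (adjoint J) ∘L J) ∘L Rn‖ ≤ ‖D‖ ∧
    ‖(ContinuousLinearMap.id ℂ Hinf - J ∘L (adjoint J)) ∘L Rinf‖ ≤ ‖D‖ ∧
    ‖J ∘L Rn - Rinf ∘L J‖ ≤ ‖D‖ := by
  subst hJ hD
  have hadj : adjoint (adjoint ιinf ∘L ιn) = adjoint ιn ∘L ιinf := by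
    rw [adjoint_comp, adjoint_adjoint]
  rw [hadj]
  refine ⟨?_, norm_id_sub_comp_le_norm_lift_sub_lift hιn hιinf Rn Rinf, ?_, ?_⟩
  · exact (opNorm_comp_le _ _).trans <| mul_le_one₀
      (norm_adjoint_le_one_of_adjoint_comp_self_eq_id hιinf) (norm_nonneg _)
      (norm_le_one_of_adjoint_comp_self_eq_id hιn)
  · rw [norm_sub_rev (ιn ∘L Rn ∘L adjoint ιn)]
    exact norm_id_sub_comp_le_norm_lift_sub_lift hιinf hιn Rinf Rn
  · have hιn' (x : Hn) : adjoint ιn (ιn x) = x := DFunLike.congr_fun hιn x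
    have hιinf' (x : Hinf) : adjoint ιinf (ιinf x) = x := DFunLike.congr_fun hιinf x
    have hfactor : (adjoint ιinf ∘L ιn) ∘L Rn - Rinf ∘L (adjoint ιinf ∘L ιn) =
        adjoint ιinf ∘L
          (ιn ∘L Rn ∘L adjoint ιn - ιinf ∘L Rinf ∘L adjoint ιinf) ∘L ιn := by
      ext x
      simp [hιn', hιinf']
    rw [hfactor]
    exact norm_comp_comp_le_of_norm_le_one (norm_adjoint_le_one_of_adjoint_comp_self_eq_id hιinf)
      (norm_le_one_of_adjoint_comp_self_eq_id hιn) _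
end

section
/- Let H₁, H₂ be complex Hilbert spaces, J : H₁ → H₂ a bounded operator with ‖J‖ ≤ 1, R₁ : H₁ → H₁ and R₂ : H₂ → H₂ bounded operators, and δ ≥ 0. If ‖(id_{H₁} − J* ∘ J) ∘ R₁‖ ≤ δ and ‖J ∘ R₁ − R₂ ∘ J‖ ≤ δ, then ‖R₁‖ ≤ ‖R₂‖ + 2δ. -/
open ContinuousLinearMap

/-- Norm estimate for the resolvent: `‖R₁‖ ≤ ‖R₂‖ + 2δ` under the QUE-estimates. -/
theorem resolvent_norm_estimate {H₁ H₂ : Type*}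
    [NormedAddCommGroup H₁] [InnerProductSpace ℂ H₁] [CompleteSpace H₁]
    [NormedAddCommGroup H₂] [InnerProductSpace ℂ H₂] [CompleteSpace H₂]
    (J : H₁ →L[ℂ] H₂) (hJ : ‖J‖ ≤ 1)
    (R₁ : H₁ →L[ℂ] H₁) (R₂ : H₂ →L[ℂ] H₂) (δ : ℝ) (hδ : 0 ≤ δ)
    (h₁ : ‖(ContinuousLinearMap.id ℂ H₁ - (adjoint J) ∘L J) ∘L R₁‖ ≤ δ)
    (h₂ : ‖J ∘L R₁ - R₂ ∘L J‖ ≤ δ) :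
    ‖R₁‖ ≤ ‖R₂‖ + 2 * δ := by
  have hJ' : ‖adjoint J‖ ≤ 1 := by rwa [LinearIsometryEquiv.norm_map]
  have decomp : R₁ = (ContinuousLinearMap.id ℂ H₁ - (adjoint J) ∘L J) ∘L R₁ +
      (adjoint J) ∘L (J ∘L R₁ - R₂ ∘L J) + (adjoint J) ∘L (R₂ ∘L J) := by
    ext x
    simp
  have h₃ : ‖(adjoint J) ∘L (J ∘L R₁ - R₂ ∘L J)‖ ≤ δ :=
    calc _ ≤ ‖adjoint J‖ * ‖J ∘L R₁ - R₂ ∘L J‖ := opNorm_comp_le _ _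
      _ ≤ 1 * δ := by gcongr
      _ = δ := one_mul δ
  have h₄ : ‖(adjoint J) ∘L (R₂ ∘L J)‖ ≤ ‖R₂‖ :=
    calc _ ≤ ‖adjoint J‖ * ‖R₂ ∘L J‖ := opNorm_comp_le _ _
      _ ≤ ‖adjoint J‖ * (‖R₂‖ * ‖J‖) := by gcongr; exact opNorm_comp_le _ _
      _ ≤ 1 * (‖R₂‖ * 1) := by gcongr
      _ = ‖R₂‖ := by ring
  calc ‖R₁‖ ≤ ‖(ContinuousLinearMap.id ℂ H₁ - (adjoint J) ∘L J) ∘L R₁‖ +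
        ‖(adjoint J) ∘L (J ∘L R₁ - R₂ ∘L J)‖ + ‖(adjoint J) ∘L (R₂ ∘L J)‖ :=
        (congrArg norm decomp).trans_le (norm_add₃_le)
    _ ≤ ‖R₂‖ + 2 * δ := by linarith
end

section
/- In the parent-space setup, with P_n := ι_n ∘ ι_n* and P_∞ := ι_∞ ∘ ι_∞*, let δ ≥ 0 and assume P_n ∘ P_∞ = P_∞ ∘ P_n together with the estimates ‖J ∘ R_n − R_∞ ∘ J‖ ≤ δ, ‖(id_{H_n} − J* ∘ J) ∘ R_n‖ ≤ δ and ‖(id_{H_∞} − J ∘ J*) ∘ R_∞*‖ ≤ δ. Then ‖D‖ ≤ 3δ. (So when the projections commute, QUE-convergence implies Weidmann's convergence with the same order of convergence speed.) -/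
open ContinuousLinearMap

/-- An isometry between Hilbert spaces, in the form `ι* ∘ ι = id`, has norm at most one. -/
theorem opNorm_le_one_of_adjoint_comp_self {E F : Type*}
    [NormedAddCommGroup E] [InnerProductSpace ℂ E] [CompleteSpace E]
    [NormedAddCommGroup F] [InnerProductSpace ℂ F] [CompleteSpace F]
    {ι : E →L[ℂ] F} (h : adjoint ι ∘L ι = ContinuousLinearMap.id ℂ E) : ‖ι‖ ≤ 1 :=
  ι.opNorm_le_bound zero_le_one fun x => by
    rw [(norm_map_iff_adjoint_comp_self ι).mpr h x, one_mul]

/-- Lifting an operator between subspaces to the ambient space does not increase its norm. -/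
theorem opNorm_comp_adjoint_le {E F G : Type*}
    [NormedAddCommGroup E] [InnerProductSpace ℂ E] [CompleteSpace E]
    [NormedAddCommGroup F] [InnerProductSpace ℂ F] [CompleteSpace F]
    [NormedAddCommGroup G] [InnerProductSpace ℂ G] [CompleteSpace G]
    {ι : E →L[ℂ] G} {κ : F →L[ℂ] G} (hι : ‖ι‖ ≤ 1) (hκ : ‖κ‖ ≤ 1) (T : F →L[ℂ] E) :
    ‖ι ∘L T ∘L adjoint κ‖ ≤ ‖T‖ := by
  have hκ' : ‖adjoint κ‖ ≤ 1 := by rwa [LinearIsometryEquiv.norm_map]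
  calc ‖ι ∘L T ∘L adjoint κ‖ ≤ ‖ι‖ * (‖T‖ * ‖adjoint κ‖) :=
        (opNorm_comp_le _ _).trans (by gcongr; exact opNorm_comp_le _ _)
    _ ≤ 1 * (‖T‖ * 1) := by gcongr
    _ = ‖T‖ := by ring

/-- QUE-convergence implies Weidmann's convergence with the same order of speed,
provided the projections `Pn` and `P∞` commute. -/
theorem que_implies_weidmann_commuting_projections {Hn Hinf H : Type*}
    [NormedAddCommGroup Hn] [InnerProductSpace ℂ Hn] [CompleteSpace Hn]
    [NormedAddCommGroup Hinf] [InnerProductSpace ℂ Hinf] [CompleteSpace Hinf]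
    [NormedAddCommGroup H] [InnerProductSpace ℂ H] [CompleteSpace H]
    (ιn : Hn →L[ℂ] H) (ιinf : Hinf →L[ℂ] H)
    (hιn : (adjoint ιn) ∘L ιn = ContinuousLinearMap.id ℂ Hn)
    (hιinf : (adjoint ιinf) ∘L ιinf = ContinuousLinearMap.id ℂ Hinf)
    (Rn : Hn →L[ℂ] Hn) (Rinf : Hinf →L[ℂ] Hinf)
    (J : Hn →L[ℂ] Hinf) (D : H →L[ℂ] H) (Pn Pinf : H →L[ℂ] H)
    (hJ : J = (adjoint ιinf) ∘L ιn)
    (hD : D = ιn ∘L Rn ∘L (adjoint ιn) - ιinf ∘L Rinf ∘L (adjoint ιinf))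
    (hPn : Pn = ιn ∘L (adjoint ιn))
    (hPinf : Pinf = ιinf ∘L (adjoint ιinf))
    (hcomm : Pn ∘L Pinf = Pinf ∘L Pn)
    (δ : ℝ) (hδ : 0 ≤ δ)
    (h₁ : ‖J ∘L Rn - Rinf ∘L J‖ ≤ δ)
    (h₂ : ‖(ContinuousLinearMap.id ℂ Hn - (adjoint J) ∘L J) ∘L Rn‖ ≤ δ)
    (h₃ : ‖(ContinuousLinearMap.id ℂ Hinf - J ∘L (adjoint J)) ∘L (adjoint Rinf)‖ ≤ δ) :
    ‖D‖ ≤ 3 * δ := by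
  have hn (x : Hn) : adjoint ιn (ιn x) = x := DFunLike.congr_fun hιn x
  have hinf (x : Hinf) : adjoint ιinf (ιinf x) = x := DFunLike.congr_fun hιinf x
  have hc (x : H) : ιn (adjoint ιn (ιinf (adjoint ιinf x))) =
      ιinf (adjoint ιinf (ιn (adjoint ιn x))) := by
    subst hPn hPinf
    exact DFunLike.congr_fun hcomm x
  have h₃' : ‖Rinf ∘L (ContinuousLinearMap.id ℂ Hinf - J ∘L adjoint J)‖ ≤ δ := by
    rw [← LinearIsometryEquiv.norm_map adjoint]
    simpa only [adjoint_comp, map_sub, adjoint_adjoint, adjoint_id] using h₃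
  have hdecomp : D = ιinf ∘L (J ∘L Rn - Rinf ∘L J) ∘L adjoint ιn
      + ιn ∘L ((ContinuousLinearMap.id ℂ Hn - adjoint J ∘L J) ∘L Rn) ∘L adjoint ιn
      - ιinf ∘L (Rinf ∘L (ContinuousLinearMap.id ℂ Hinf - J ∘L adjoint J)) ∘L adjoint ιinf := by
    ext x
    simp [hD, hJ, hc, hn, hinf]
  have hιn' := opNorm_le_one_of_adjoint_comp_self hιn
  have hιinf' := opNorm_le_one_of_adjoint_comp_self hιinf
  rw [hdecomp]
  refine (norm_sub_le _ _).trans ?_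
  linarith [norm_add_le (ιinf ∘L (J ∘L Rn - Rinf ∘L J) ∘L adjoint ιn)
      (ιn ∘L ((ContinuousLinearMap.id ℂ Hn - adjoint J ∘L J) ∘L Rn) ∘L adjoint ιn),
    (opNorm_comp_adjoint_le hιinf' hιn' _).trans h₁,
    (opNorm_comp_adjoint_le hιn' hιn' _).trans h₂,
    (opNorm_comp_adjoint_le hιinf' hιinf' _).trans h₃']
end

section
/- Let H_n, H_∞ be complex Hilbert spaces and J : H_n → H_∞ a bounded operator. Suppose H and H' are complex Hilbert spaces with isometries ι_n : H_n → H, ι_∞ : H_∞ → H and κ_n : H_n → H', κ_∞ : H_∞ → H' such that ι_∞* ∘ ι_n = J = κ_∞* ∘ κ_n. If the projections ι_n ∘ ι_n* and ι_∞ ∘ ι_∞* commute in H, then the projections κ_n ∘ κ_n* and κ_∞ ∘ κ_∞* commute in H'. (The commuting property of the projections is invariant among all parent spaces factorising the same identification operator.) -/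
open ContinuousLinearMap

section

variable {E F G : Type*}
  [NormedAddCommGroup E] [InnerProductSpace ℂ E] [CompleteSpace E]
  [NormedAddCommGroup F] [InnerProductSpace ℂ F] [CompleteSpace F]
  [NormedAddCommGroup G] [InnerProductSpace ℂ G] [CompleteSpace G]

/-- If the range projections of two isometries `V` and `W` commute, then `W* V` is a partial
isometry. -/
theorem partialIsometry_of_range_projections_commute {V : E →L[ℂ] G} {W : F →L[ℂ] G}
    (hV : adjoint V ∘L V = ContinuousLinearMap.id ℂ E)
    (hW : adjoint W ∘L W = ContinuousLinearMap.id ℂ F)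
    (hcomm : (V ∘L adjoint V) ∘L (W ∘L adjoint W) = (W ∘L adjoint W) ∘L (V ∘L adjoint V)) :
    (adjoint W ∘L V) ∘L adjoint (adjoint W ∘L V) ∘L (adjoint W ∘L V) = adjoint W ∘L V := by
  have hV' (x : E) : adjoint V (V x) = x := DFunLike.congr_fun hV x
  have hW' (x : F) : adjoint W (W x) = x := DFunLike.congr_fun hW x
  ext x
  have h : V (adjoint V (W (adjoint W (V x)))) = W (adjoint W (V (adjoint V (V x)))) :=
    DFunLike.congr_fun hcomm (V x)
  simp [adjoint_comp, h, hV', hW']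

/-- If `V` and `W` are isometries and `W* V` is a partial isometry, then the range projections of
`V` and `W` commute. -/
theorem range_projections_commute_of_partialIsometry {V : E →L[ℂ] G} {W : F →L[ℂ] G}
    (hV : adjoint V ∘L V = ContinuousLinearMap.id ℂ E)
    (hW : adjoint W ∘L W = ContinuousLinearMap.id ℂ F)
    (hJ : (adjoint W ∘L V) ∘L adjoint (adjoint W ∘L V) ∘L (adjoint W ∘L V) = adjoint W ∘L V) :
    (V ∘L adjoint V) ∘L (W ∘L adjoint W) = (W ∘L adjoint W) ∘L (V ∘L adjoint V) := by
  have hV' (x : E) : adjoint V (V x) = x := DFunLike.congr_fun hV x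
  have hW' (x : F) : adjoint W (W x) = x := DFunLike.congr_fun hW x
  have hJ' (x : E) : adjoint W (V (adjoint V (W (adjoint W (V x))))) = adjoint W (V x) := by
    simpa [adjoint_comp] using DFunLike.congr_fun hJ x
  have key (x : F) : V (adjoint V (W x)) = W (adjoint W (V (adjoint V (W x)))) := by
    rw [← sub_eq_zero, ← inner_self_eq_zero (𝕜 := ℂ)]
    set D := V (adjoint V (W x)) - W (adjoint W (V (adjoint V (W x)))) with hD
    have hWD : adjoint W D = 0 := by simp [hD, hW']
    have hVD : adjoint W (V (adjoint V D)) = 0 := by simp [hD, hV', hJ']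
    calc inner ℂ D D
        = inner ℂ (V (adjoint V (W x))) D
          - inner ℂ (W (adjoint W (V (adjoint V (W x))))) D := by
          rw [← inner_sub_left]
      _ = inner ℂ x (adjoint W (V (adjoint V D)))
          - inner ℂ (adjoint W (V (adjoint V (W x)))) (adjoint W D) := by
          simp only [adjoint_inner_right, ← adjoint_inner_left V]
      _ = 0 := by simp [hVD, hWD]
  have hPQ : (V ∘L adjoint V) ∘L (W ∘L adjoint W) =
      (W ∘L adjoint W) ∘L (V ∘L adjoint V) ∘L (W ∘L adjoint W) := by
    ext x
    exact key (adjoint W x)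
  have hQP := congrArg adjoint hPQ
  simp only [adjoint_comp, adjoint_adjoint, comp_assoc] at hPQ hQP ⊢
  exact hPQ.trans hQP.symm

end

/-- The commuting property of the projections is an invariant among all parent spaces
factorising the same identification operator `J`. -/
theorem projection_commuting_invariant {Hn Hinf H H' : Type*}
    [NormedAddCommGroup Hn] [InnerProductSpace ℂ Hn] [CompleteSpace Hn]
    [NormedAddCommGroup Hinf] [InnerProductSpace ℂ Hinf] [CompleteSpace Hinf]
    [NormedAddCommGroup H] [InnerProductSpace ℂ H] [CompleteSpace H]
    [NormedAddCommGroup H'] [InnerProductSpace ℂ H'] [CompleteSpace H']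
    (J : Hn →L[ℂ] Hinf)
    (ιn : Hn →L[ℂ] H) (ιinf : Hinf →L[ℂ] H)
    (κn : Hn →L[ℂ] H') (κinf : Hinf →L[ℂ] H')
    (hιn : (adjoint ιn) ∘L ιn = ContinuousLinearMap.id ℂ Hn)
    (hιinf : (adjoint ιinf) ∘L ιinf = ContinuousLinearMap.id ℂ Hinf)
    (hκn : (adjoint κn) ∘L κn = ContinuousLinearMap.id ℂ Hn)
    (hκinf : (adjoint κinf) ∘L κinf = ContinuousLinearMap.id ℂ Hinf)
    (hfacι : (adjoint ιinf) ∘L ιn = J)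
    (hfacκ : (adjoint κinf) ∘L κn = J)
    (hcomm : (ιn ∘L (adjoint ιn)) ∘L (ιinf ∘L (adjoint ιinf)) =
             (ιinf ∘L (adjoint ιinf)) ∘L (ιn ∘L (adjoint ιn))) :
    (κn ∘L (adjoint κn)) ∘L (κinf ∘L (adjoint κinf)) =
      (κinf ∘L (adjoint κinf)) ∘L (κn ∘L (adjoint κn)) := by
  subst hfacι
  have hJ := partialIsometry_of_range_projections_commute hιn hιinf hcomm
  rw [← hfacκ] at hJ
  exact range_projections_commute_of_partialIsometry hκn hκinf hJ
end

section
/- In the parent-space setup, assume that the identification operator J = ι_∞* ∘ ι_n is a co-isometry, i.e. J ∘ J* = id_{H_∞}, and let δ ≥ 0 with ‖(id_{H_n} − J* ∘ J) ∘ R_n‖ ≤ δ and ‖J ∘ R_n − R_∞ ∘ J‖ ≤ δ. Then the range of ι_∞ is contained in the range of ι_n, ‖R_n − J* ∘ R_∞ ∘ J‖ ≤ 2δ, and consequently Weidmann's lifted resolvent difference satisfies ‖D‖ ≤ 2δ. -/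
open ContinuousLinearMap

/-- A Hilbert space isometry has operator norm at most one. -/
theorem norm_le_one_of_adjoint_comp_self_eq_id_s13 {E F : Type*}
    [NormedAddCommGroup E] [InnerProductSpace ℂ E] [CompleteSpace E]
    [NormedAddCommGroup F] [InnerProductSpace ℂ F] [CompleteSpace F]
    {T : E →L[ℂ] F} (hT : (adjoint T) ∘L T = ContinuousLinearMap.id ℂ E) : ‖T‖ ≤ 1 := by
  have h := norm_adjoint_comp_self T
  rw [hT] at h
  have h_id : ‖ContinuousLinearMap.id ℂ E‖ ≤ 1 := norm_id_le
  nlinarith [norm_nonneg T]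

/-- If `V* ∘ U` is a co-isometry for isometries `U` and `V`, then `V` factors through `U`. -/
theorem comp_adjoint_eq_of_coisometry {E F G : Type*}
    [NormedAddCommGroup E] [InnerProductSpace ℂ E] [CompleteSpace E]
    [NormedAddCommGroup F] [InnerProductSpace ℂ F] [CompleteSpace F]
    [NormedAddCommGroup G] [InnerProductSpace ℂ G] [CompleteSpace G]
    {U : E →L[ℂ] G} {V : F →L[ℂ] G}
    (hU : (adjoint U) ∘L U = ContinuousLinearMap.id ℂ E)
    (hV : (adjoint V) ∘L V = ContinuousLinearMap.id ℂ F)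
    (hco : ((adjoint V) ∘L U) ∘L adjoint ((adjoint V) ∘L U) = ContinuousLinearMap.id ℂ F) :
    U ∘L adjoint ((adjoint V) ∘L U) = V := by
  have hU' (x : E) : adjoint U (U x) = x := DFunLike.congr_fun hU x
  have hV' (x : F) : adjoint V (V x) = x := DFunLike.congr_fun hV x
  have hco' (x : F) : adjoint V (U (adjoint U (V x))) = x := by
    simpa [adjoint_comp] using DFunLike.congr_fun hco x
  have h := norm_adjoint_comp_self (U ∘L adjoint ((adjoint V) ∘L U) - V)
  have h_zero : adjoint (U ∘L adjoint ((adjoint V) ∘L U) - V) ∘L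
      (U ∘L adjoint ((adjoint V) ∘L U) - V) = 0 := by
    ext x
    simp [adjoint_comp, map_sub, hU', hV', hco']
  rw [h_zero, norm_zero] at h
  exact sub_eq_zero.mp (norm_eq_zero.mp (mul_self_eq_zero.mp h.symm))

/-- If the identification operator `J = ι∞* ∘ ιₙ` is a co-isometry, then the range of
`ι∞` is contained in the range of `ιₙ`, and the QUE-estimates imply Weidmann's norm
estimate `‖D‖ ≤ 2δ`. -/
theorem coisometric_identification_weidmann_estimate {Hn Hinf H : Type*}
    [NormedAddCommGroup Hn] [InnerProductSpace ℂ Hn] [CompleteSpace Hn]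
    [NormedAddCommGroup Hinf] [InnerProductSpace ℂ Hinf] [CompleteSpace Hinf]
    [NormedAddCommGroup H] [InnerProductSpace ℂ H] [CompleteSpace H]
    (ιn : Hn →L[ℂ] H) (ιinf : Hinf →L[ℂ] H)
    (hιn : (adjoint ιn) ∘L ιn = ContinuousLinearMap.id ℂ Hn)
    (hιinf : (adjoint ιinf) ∘L ιinf = ContinuousLinearMap.id ℂ Hinf)
    (Rn : Hn →L[ℂ] Hn) (Rinf : Hinf →L[ℂ] Hinf)
    (J : Hn →L[ℂ] Hinf) (D : H →L[ℂ] H)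
    (hJ : J = (adjoint ιinf) ∘L ιn)
    (hD : D = ιn ∘L Rn ∘L (adjoint ιn) - ιinf ∘L Rinf ∘L (adjoint ιinf))
    (hco : J ∘L (adjoint J) = ContinuousLinearMap.id ℂ Hinf)
    (δ : ℝ) (hδ : 0 ≤ δ)
    (h₁ : ‖(ContinuousLinearMap.id ℂ Hn - (adjoint J) ∘L J) ∘L Rn‖ ≤ δ)
    (h₂ : ‖J ∘L Rn - Rinf ∘L J‖ ≤ δ) :
    Set.range ιinf ⊆ Set.range ιn ∧
    ‖Rn - (adjoint J) ∘L Rinf ∘L J‖ ≤ 2 * δ ∧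
    ‖D‖ ≤ 2 * δ := by
  have h_fac : ιn ∘L adjoint J = ιinf := by
    subst hJ
    exact comp_adjoint_eq_of_coisometry hιn hιinf hco
  have h_fac_adj : J ∘L adjoint ιn = adjoint ιinf := by
    rw [← h_fac, adjoint_comp, adjoint_adjoint]
  have hJ_norm : ‖adjoint J‖ ≤ 1 :=
    norm_le_one_of_adjoint_comp_self_eq_id_s13 (by rwa [adjoint_adjoint])
  have hιn_norm : ‖ιn‖ ≤ 1 := norm_le_one_of_adjoint_comp_self_eq_id_s13 hιn
  have hιn_adj_norm : ‖adjoint ιn‖ ≤ 1 := by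
    rwa [LinearIsometryEquiv.norm_map]
  have h_diff : ‖Rn - (adjoint J) ∘L Rinf ∘L J‖ ≤ 2 * δ := by
    have h_split : Rn - (adjoint J) ∘L Rinf ∘L J =
        (ContinuousLinearMap.id ℂ Hn - (adjoint J) ∘L J) ∘L Rn +
          (adjoint J) ∘L (J ∘L Rn - Rinf ∘L J) := by
      ext x
      simp
    calc ‖Rn - (adjoint J) ∘L Rinf ∘L J‖
        ≤ ‖(ContinuousLinearMap.id ℂ Hn - (adjoint J) ∘L J) ∘L Rn‖ +
            ‖adjoint J‖ * ‖J ∘L Rn - Rinf ∘L J‖ := by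
          rw [h_split]
          exact norm_add_le_of_le le_rfl (opNorm_comp_le _ _)
      _ ≤ δ + 1 * δ := by gcongr
      _ = 2 * δ := by ring
  refine ⟨?_, h_diff, ?_⟩
  · rintro _ ⟨x, rfl⟩
    exact ⟨adjoint J x, DFunLike.congr_fun h_fac x⟩
  · have hD_fac : D = ιn ∘L (Rn - (adjoint J) ∘L Rinf ∘L J) ∘L adjoint ιn := by
      rw [hD, ← h_fac_adj, ← h_fac]
      ext x
      simp
    calc ‖D‖ ≤ ‖ιn‖ * (‖Rn - (adjoint J) ∘L Rinf ∘L J‖ * ‖adjoint ιn‖) := by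
          rw [hD_fac]
          exact (opNorm_comp_le _ _).trans (by gcongr; exact opNorm_comp_le _ _)
      _ ≤ 1 * (2 * δ * 1) := by gcongr
      _ = 2 * δ := by ring
end

section
/- Let J : H₁ → H₂ be a contraction between complex Hilbert spaces and let W and W_∞ be its defect operators. Then W and W_∞ are self-adjoint with spectrum contained in the real interval [0,1], and their spectra agree away from the value 1: spectrum(W) \ {1} = spectrum(W_∞) \ {1}. -/
open ContinuousLinearMap

section BanachComp

variable {𝕜 E F : Type*} [NontriviallyNormedField 𝕜]
  [NormedAddCommGroup E] [NormedSpace 𝕜 E] [NormedAddCommGroup F] [NormedSpace 𝕜 F]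

/-- Jacobson's lemma for a pair of operators between different spaces. -/
lemma ContinuousLinearMap.isUnit_algebraMap_sub_comp_swap (A : F →L[𝕜] E) (B : E →L[𝕜] F)
    {z : 𝕜} (hz : z ≠ 0) (h : IsUnit (algebraMap 𝕜 (E →L[𝕜] E) z - A ∘L B)) :
    IsUnit (algebraMap 𝕜 (F →L[𝕜] F) z - B ∘L A) := by
  obtain ⟨⟨U, R, hUR, hRU⟩, rfl : U = _⟩ := h
  have right_inv (x : E) : z • R x - A (B (R x)) = x := by
    simpa [Algebra.algebraMap_eq_smul_one] using congr($hUR x)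
  have left_inv (x : E) : z • R x - R (A (B x)) = x := by
    simpa [Algebra.algebraMap_eq_smul_one] using congr($hRU x)
  refine ⟨⟨_, z⁻¹ • (1 + B ∘L R ∘L A), ?_, ?_⟩, rfl⟩
  · ext x
    have key := congr(B $(right_inv (A x)))
    simp only [map_sub, map_smul] at key
    have hcancel := congr(z⁻¹ • $key)
    simp only [smul_sub, smul_smul, inv_mul_cancel₀ hz, one_smul] at hcancel
    simp [Algebra.algebraMap_eq_smul_one, smul_smul, hz, smul_add]
    linear_combination (norm := module) hcancel
  · ext x
    have key := congr(B $(left_inv (A x)))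
    simp only [map_sub, map_smul] at key
    have hcancel := congr(z⁻¹ • $key)
    simp only [smul_sub, smul_smul, inv_mul_cancel₀ hz, one_smul] at hcancel
    simp [Algebra.algebraMap_eq_smul_one, smul_smul, hz, smul_add, smul_sub]
    linear_combination (norm := module) hcancel

lemma ContinuousLinearMap.mem_spectrum_comp_swap (A : F →L[𝕜] E) (B : E →L[𝕜] F)
    {z : 𝕜} (hz : z ≠ 0) (h : z ∈ spectrum 𝕜 (A ∘L B)) : z ∈ spectrum 𝕜 (B ∘L A) := by
  rw [spectrum.mem_iff] at h ⊢
  exact fun hu => h (isUnit_algebraMap_sub_comp_swap B A hz hu)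

end BanachComp

lemma spectrum_diff_one_subset_of_defect {H K : Type*}
    [NormedAddCommGroup H] [NormedSpace ℂ H] [NormedAddCommGroup K] [NormedSpace ℂ K]
    {A : K →L[ℂ] H} {B : H →L[ℂ] K}
    {W : H →L[ℂ] H} {V : K →L[ℂ] K}
    (hWsq : W ∘L W = ContinuousLinearMap.id ℂ H - A ∘L B)
    (hVsq : V ∘L V = ContinuousLinearMap.id ℂ K - B ∘L A)
    (hW : spectrum ℂ W ⊆ (fun t : ℝ => (t : ℂ)) '' Set.Icc (0 : ℝ) 1)
    (hV : spectrum ℂ V ⊆ (fun t : ℝ => (t : ℂ)) '' Set.Icc (0 : ℝ) 1) :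
    spectrum ℂ W \ {1} ⊆ spectrum ℂ V \ {1} := by
  rintro z ⟨hz, hz1⟩
  refine ⟨?_, hz1⟩
  obtain ⟨t, ⟨ht0, -⟩, rfl⟩ := hW hz
  have ht1 : t ≠ 1 := by rintro rfl; simp at hz1
  have hne : (1 - (t : ℂ) ^ 2) ≠ 0 := by
    norm_cast
    intro h
    exact ht1 ((sq_eq_sq₀ ht0 zero_le_one).1 (by linarith))
  have hsq : (t : ℂ) ^ 2 ∈ spectrum ℂ (1 - A ∘L B) := by
    have := spectrum.pow_mem_pow W 2 hz
    rwa [pow_two W, mul_def, hWsq] at this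
  have hAB : 1 - (t : ℂ) ^ 2 ∈ spectrum ℂ (A ∘L B) := by
    rw [spectrum.mem_iff] at hsq ⊢
    contrapose! hsq
    convert hsq.neg using 1
    simp only [map_sub, map_one]
    abel
  have hBA := mem_spectrum_comp_swap A B hne hAB
  have hVV : (t : ℂ) ^ 2 ∈ spectrum ℂ (V ^ 2) := by
    rw [pow_two V, mul_def, hVsq]
    rw [spectrum.mem_iff] at hBA ⊢
    contrapose! hBA
    convert hBA.neg using 1
    simp only [map_sub, map_one, ← one_def]
    abel
  rw [spectrum.map_pow_of_pos V two_pos] at hVV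
  obtain ⟨w, hw, hwt⟩ := hVV
  obtain ⟨s, ⟨hs0, -⟩, rfl⟩ := hV hw
  have hst : s ^ 2 = t ^ 2 := by
    simp only at hwt
    exact_mod_cast hwt
  rwa [← (sq_eq_sq₀ hs0 ht0).1 hst]

section Defect

variable {H K : Type*}
  [NormedAddCommGroup H] [InnerProductSpace ℂ H] [CompleteSpace H]
  [NormedAddCommGroup K] [InnerProductSpace ℂ K] [CompleteSpace K]

lemma norm_le_one_of_comp_self_eq_id_sub {J : H →L[ℂ] K} {W : H →L[ℂ] H}
    (hW : IsSelfAdjoint W)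
    (hWsq : W ∘L W = ContinuousLinearMap.id ℂ H - (adjoint J) ∘L J) : ‖W‖ ≤ 1 := by
  refine W.opNorm_le_bound zero_le_one fun x => ?_
  have hsum : ‖W x‖ ^ 2 = ‖x‖ ^ 2 - ‖J x‖ ^ 2 := by
    have hnorm := W.apply_norm_sq_eq_inner_adjoint_left x
    rw [hW.adjoint_eq, hWsq] at hnorm
    rw [hnorm, J.apply_norm_sq_eq_inner_adjoint_left x]
    simp [inner_sub_left, ← Complex.ofReal_pow]
  rw [one_mul]
  exact le_of_sq_le_sq (by nlinarith [sq_nonneg ‖J x‖]) (norm_nonneg x)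

lemma ContinuousLinearMap.IsPositive.spectrum_subset_Icc {W : H →L[ℂ] H}
    (hW : W.IsPositive) (hnorm : ‖W‖ ≤ 1) :
    spectrum ℂ W ⊆ (fun t : ℝ => (t : ℂ)) '' Set.Icc (0 : ℝ) 1 := by
  intro z hz
  have hre : (z.re : ℂ) = z := (hW.isSelfAdjoint.mem_spectrum_eq_re hz).symm
  have hz0 : 0 ≤ z.re := by
    refine spectrum_nonneg_of_nonneg ((nonneg_iff_isPositive W).2 hW) ?_
    rwa [← spectrum.algebraMap_mem_iff ℂ, Complex.coe_algebraMap, hre]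
  have hz1 : ‖z‖ ≤ 1 := (spectrum.norm_le_norm_mul_of_mem hz).trans
    (mul_le_one₀ hnorm (norm_nonneg _) norm_id_le)
  exact ⟨z.re, ⟨hz0, (Complex.re_le_norm z).trans hz1⟩, hre⟩

end Defect

/-- The defect operators `W` and `W∞` of a contraction `J` are self-adjoint with
spectrum in the real interval `[0,1]`, and their spectra agree away from `1`. -/
theorem defect_operator_spectra {H₁ H₂ : Type*}
    [NormedAddCommGroup H₁] [InnerProductSpace ℂ H₁] [CompleteSpace H₁]
    [NormedAddCommGroup H₂] [InnerProductSpace ℂ H₂] [CompleteSpace H₂]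
    (J : H₁ →L[ℂ] H₂) (hJ : ‖J‖ ≤ 1)
    (W : H₁ →L[ℂ] H₁) (Winf : H₂ →L[ℂ] H₂)
    (hW : W.IsPositive)
    (hWsq : W ∘L W = ContinuousLinearMap.id ℂ H₁ - (adjoint J) ∘L J)
    (hWinf : Winf.IsPositive)
    (hWinfsq : Winf ∘L Winf = ContinuousLinearMap.id ℂ H₂ - J ∘L (adjoint J)) :
    IsSelfAdjoint W ∧ IsSelfAdjoint Winf ∧
    spectrum ℂ W ⊆ (fun t : ℝ => (t : ℂ)) '' Set.Icc (0 : ℝ) 1 ∧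
    spectrum ℂ Winf ⊆ (fun t : ℝ => (t : ℂ)) '' Set.Icc (0 : ℝ) 1 ∧
    spectrum ℂ W \ {1} = spectrum ℂ Winf \ {1} := by
  have hWs := hW.isSelfAdjoint
  have hVs := hWinf.isSelfAdjoint
  have hWI := hW.spectrum_subset_Icc (norm_le_one_of_comp_self_eq_id_sub hWs hWsq)
  have hVI := hWinf.spectrum_subset_Icc
    (norm_le_one_of_comp_self_eq_id_sub (J := adjoint J) hVs (by rwa [adjoint_adjoint]))
  exact ⟨hWs, hVs, hWI, hVI,
    (spectrum_diff_one_subset_of_defect hWsq hWinfsq hWI hVI).antisymm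
      (spectrum_diff_one_subset_of_defect hWinfsq hWsq hVI hWI)⟩
end

section
/- Let H_∞ be a complex Hilbert space, (H_n)_{n ∈ ℕ} a family of complex Hilbert spaces, and for each n ∈ ℕ let J_n : H_n → H_∞ be a bounded operator with ‖J_n‖ ≤ 1. Then there exist a complex Hilbert space H and bounded operators ι_n : H_n → H (n ∈ ℕ) and ι_∞ : H_∞ → H such that ι_∞* ∘ ι_∞ = id_{H_∞}, ι_n* ∘ ι_n = id_{H_n} for all n (i.e. all ι's are isometries), and ι_∞* ∘ ι_n = J_n for all n ∈ ℕ. (A parent space factorising the identification operators always exists when the identification operators are contractions.) -/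
open ContinuousLinearMap

universe u v

/-- A contraction `T` has a defect operator `D` with `‖T x‖ ^ 2 + ‖D x‖ ^ 2 = ‖x‖ ^ 2`. -/
theorem ContinuousLinearMap.exists_norm_sq_add_norm_sq_eq {E F : Type*}
    [NormedAddCommGroup E] [InnerProductSpace ℂ E] [CompleteSpace E]
    [NormedAddCommGroup F] [InnerProductSpace ℂ F] [CompleteSpace F]
    (T : E →L[ℂ] F) (hT : ‖T‖ ≤ 1) :
    ∃ D : E →L[ℂ] E, ∀ x, ‖T x‖ ^ 2 + ‖D x‖ ^ 2 = ‖x‖ ^ 2 := by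
  have inner_eq (x : E) :
      inner ℂ ((1 - adjoint T ∘L T) x) x = ((‖x‖ ^ 2 - ‖T x‖ ^ 2 : ℝ) : ℂ) := by
    simp [adjoint_inner_left, inner_self_eq_norm_sq_to_K]
  have nonneg : 0 ≤ 1 - adjoint T ∘L T := by
    rw [nonneg_iff_isPositive, isPositive_iff_complex]
    intro x
    have hx : ‖T x‖ ≤ ‖x‖ := by simpa using T.le_of_opNorm_le hT x
    rw [inner_eq, RCLike.re_eq_complex_re, Complex.ofReal_re]
    refine ⟨rfl, sub_nonneg.mpr ?_⟩
    exact pow_le_pow_left₀ (norm_nonneg _) hx 2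
  obtain ⟨D, hD⟩ := CStarAlgebra.nonneg_iff_eq_star_mul_self.mp nonneg
  refine ⟨D, fun x => ?_⟩
  have h := inner_eq x
  rw [hD, mul_def, comp_apply, star_eq_adjoint, adjoint_inner_left, inner_self_eq_norm_sq_to_K] at h
  have h' : ‖D x‖ ^ 2 = ‖x‖ ^ 2 - ‖T x‖ ^ 2 := Complex.ofReal_injective (by simpa using h)
  linarith

/-- A parent space factorising the identification operators always exists, provided
the identification operators are contractions. -/
theorem parent_space_exists {Hinf : Type v}
    [NormedAddCommGroup Hinf] [InnerProductSpace ℂ Hinf] [CompleteSpace Hinf]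
    (Hn : ℕ → Type u)
    [∀ n, NormedAddCommGroup (Hn n)] [∀ n, InnerProductSpace ℂ (Hn n)]
    [∀ n, CompleteSpace (Hn n)]
    (J : ∀ n, Hn n →L[ℂ] Hinf) (hJ : ∀ n, ‖J n‖ ≤ 1) :
    ∃ (H : Type (max u v)) (_ : NormedAddCommGroup H) (_ : InnerProductSpace ℂ H)
      (_ : CompleteSpace H) (ι : ∀ n, Hn n →L[ℂ] H) (ιinf : Hinf →L[ℂ] H),
      (adjoint ιinf) ∘L ιinf = ContinuousLinearMap.id ℂ Hinf ∧
      (∀ n, (adjoint (ι n)) ∘L (ι n) = ContinuousLinearMap.id ℂ (Hn n)) ∧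
      (∀ n, (adjoint ιinf) ∘L (ι n) = J n) := by
  choose D hD using fun n => (J n).exists_norm_sq_add_norm_sq_eq (hJ n)
  let e := (WithLp.prodContinuousLinearEquiv 2 ℂ Hinf (lp Hn 2)).symm
  refine ⟨WithLp 2 (Hinf × lp Hn 2), inferInstance, inferInstance, inferInstance,
    fun n => (e : _ →L[ℂ] _) ∘L (J n).prod (lp.singleContinuousLinearMap ℂ Hn 2 n ∘L D n),
    (e : _ →L[ℂ] _) ∘L ContinuousLinearMap.inl ℂ Hinf (lp Hn 2), ?_, fun n => ?_, fun n => ?_⟩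
  · refine (norm_map_iff_adjoint_comp_self _).mp fun x => ?_
    simp [e]
  · refine (norm_map_iff_adjoint_comp_self _).mp fun x => ?_
    rw [← sq_eq_sq₀ (norm_nonneg _) (norm_nonneg _), WithLp.prod_norm_sq_eq_of_L2, ← hD n x]
    simp [e, lp.norm_single]
  · ext x
    refine ext_inner_left ℂ fun y => ?_
    rw [comp_apply, adjoint_inner_right]
    simp [e]
end

section
/- Let H₁, H₂ be complex Hilbert spaces, R₁ : H₁ → H₁ and R₂ : H₂ → H₂ bounded operators, δ ≥ 0, δ' ≥ 0, and let J, Ĵ : H₁ → H₂ be bounded operators with ‖J − Ĵ‖ ≤ δ'. Assume the quasi-unitary-equivalence estimates ‖J‖ ≤ 1 + δ, ‖(id_{H₁} − J* ∘ J) ∘ R₁‖ ≤ δ, ‖(id_{H₂} − J ∘ J*) ∘ R₂‖ ≤ δ and ‖J ∘ R₁ − R₂ ∘ J‖ ≤ δ. Then: ‖Ĵ‖ ≤ 1 + δ + δ'; ‖(id_{H₁} − Ĵ* ∘ Ĵ) ∘ R₁‖ ≤ δ + (2(1+δ)δ' + δ'²)·‖R₁‖; ‖(id_{H₂} − Ĵ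 ∘ Ĵ*) ∘ R₂‖ ≤ δ + (2(1+δ)δ' + δ'²)·‖R₂‖; and ‖Ĵ ∘ R₁ − R₂ ∘ Ĵ‖ ≤ δ + δ'·(‖R₁‖ + ‖R₂‖). (δ-quasi-unitary equivalence transfers to δ'-equivalent identification operators.) -/
open ContinuousLinearMap

/-- Replacing `A`, `B` by operators at distance at most `d` increases the norm of the defect
`(id - A ∘ B) ∘ R` by at most `(2 * c * d + d ^ 2) * ‖R‖`, where `c` bounds the norm of `A`. -/
theorem norm_id_sub_comp_comp_le_of_close {E F : Type*}
    [NormedAddCommGroup E] [NormedSpace ℂ E] [NormedAddCommGroup F] [NormedSpace ℂ F]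
    {A A' : F →L[ℂ] E} {B B' : E →L[ℂ] F} {R : E →L[ℂ] E} {c d ε : ℝ}
    (hA : ‖A‖ ≤ c) (hB' : ‖B'‖ ≤ c + d) (hAA' : ‖A - A'‖ ≤ d) (hBB' : ‖B - B'‖ ≤ d)
    (h : ‖(ContinuousLinearMap.id ℂ E - A ∘L B) ∘L R‖ ≤ ε) :
    ‖(ContinuousLinearMap.id ℂ E - A' ∘L B') ∘L R‖ ≤ ε + (2 * c * d + d ^ 2) * ‖R‖ := by
  have hc : 0 ≤ c := (norm_nonneg _).trans hA
  have hd : 0 ≤ d := (norm_nonneg _).trans hAA'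
  have hsplit : (ContinuousLinearMap.id ℂ E - A' ∘L B') ∘L R =
      (ContinuousLinearMap.id ℂ E - A ∘L B) ∘L R +
        (A ∘L (B - B') + (A - A') ∘L B') ∘L R := by
    ext x
    simp
  have hdiff : ‖A ∘L (B - B') + (A - A') ∘L B'‖ ≤ 2 * c * d + d ^ 2 :=
    calc ‖A ∘L (B - B') + (A - A') ∘L B'‖
        ≤ ‖A‖ * ‖B - B'‖ + ‖A - A'‖ * ‖B'‖ :=
          norm_add_le_of_le (opNorm_comp_le _ _) (opNorm_comp_le _ _)
      _ ≤ c * d + d * (c + d) := by gcongr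
      _ = 2 * c * d + d ^ 2 := by ring
  rw [hsplit]
  refine norm_add_le_of_le h ((opNorm_comp_le _ _).trans ?_)
  gcongr

/-- Quasi-unitary equivalence transfers to `δ'`-equivalent identification operators,
with controlled loss in the estimates. -/
theorem que_transfers_to_equivalent_identification {H₁ H₂ : Type*}
    [NormedAddCommGroup H₁] [InnerProductSpace ℂ H₁] [CompleteSpace H₁]
    [NormedAddCommGroup H₂] [InnerProductSpace ℂ H₂] [CompleteSpace H₂]
    (R₁ : H₁ →L[ℂ] H₁) (R₂ : H₂ →L[ℂ] H₂)
    (δ δ' : ℝ) (hδ : 0 ≤ δ) (hδ' : 0 ≤ δ')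
    (J Jhat : H₁ →L[ℂ] H₂) (hclose : ‖J - Jhat‖ ≤ δ')
    (hJnorm : ‖J‖ ≤ 1 + δ)
    (h₁ : ‖(ContinuousLinearMap.id ℂ H₁ - (adjoint J) ∘L J) ∘L R₁‖ ≤ δ)
    (h₂ : ‖(ContinuousLinearMap.id ℂ H₂ - J ∘L (adjoint J)) ∘L R₂‖ ≤ δ)
    (h₃ : ‖J ∘L R₁ - R₂ ∘L J‖ ≤ δ) :
    ‖Jhat‖ ≤ 1 + δ + δ' ∧
    ‖(ContinuousLinearMap.id ℂ H₁ - (adjoint Jhat) ∘L Jhat) ∘L R₁‖ ≤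
      δ + (2 * (1 + δ) * δ' + δ' ^ 2) * ‖R₁‖ ∧
    ‖(ContinuousLinearMap.id ℂ H₂ - Jhat ∘L (adjoint Jhat)) ∘L R₂‖ ≤
      δ + (2 * (1 + δ) * δ' + δ' ^ 2) * ‖R₂‖ ∧
    ‖Jhat ∘L R₁ - R₂ ∘L Jhat‖ ≤ δ + δ' * (‖R₁‖ + ‖R₂‖) := by
  have hJhat : ‖Jhat‖ ≤ 1 + δ + δ' := by
    linarith [norm_le_norm_add_norm_sub J Jhat]
  have hadj : ‖adjoint J - adjoint Jhat‖ ≤ δ' := by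
    rwa [← map_sub, LinearIsometryEquiv.norm_map]
  have hJadj : ‖adjoint J‖ ≤ 1 + δ := by rwa [LinearIsometryEquiv.norm_map]
  have hJhatadj : ‖adjoint Jhat‖ ≤ 1 + δ + δ' := by rwa [LinearIsometryEquiv.norm_map]
  refine ⟨hJhat, norm_id_sub_comp_comp_le_of_close hJadj hJhat hadj hclose h₁,
    norm_id_sub_comp_comp_le_of_close hJnorm hJhatadj hclose hadj h₂, ?_⟩
  have hsplit : Jhat ∘L R₁ - R₂ ∘L Jhat =
      (J ∘L R₁ - R₂ ∘L J) + (R₂ ∘L (J - Jhat) - (J - Jhat) ∘L R₁) := by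
    ext x
    simp
    abel
  rw [hsplit]
  refine norm_add_le_of_le h₃ ?_
  calc ‖R₂ ∘L (J - Jhat) - (J - Jhat) ∘L R₁‖
      ≤ ‖R₂‖ * ‖J - Jhat‖ + ‖J - Jhat‖ * ‖R₁‖ :=
        norm_sub_le_of_le (opNorm_comp_le _ _) (opNorm_comp_le _ _)
    _ ≤ ‖R₂‖ * δ' + δ' * ‖R₁‖ := by gcongr
    _ = δ' * (‖R₁‖ + ‖R₂‖) := by ring
end

section
/- Let H₁, H₂ be complex Hilbert spaces, R₁ : H₁ → H₁ and R₂ : H₂ → H₂ bounded operators, δ ≥ 0, and J : H₁ → H₂ a bounded operator with 1 ≤ ‖J‖ ≤ 1 + δ, ‖(id_{H₁} − J* ∘ J) ∘ R₁‖ ≤ δ, ‖(id_{H₂} − J ∘ J*) ∘ R₂‖ ≤ δ and ‖J ∘ R₁ − R₂ ∘ J‖ ≤ δ. Define the rescaled identification operator Ĵ := ‖J‖⁻¹ • J and set δ̂ := δ·(1 + max(‖R₁‖, ‖R₂‖)·(2 + 3δ)). Then ‖J − Ĵ‖ = ‖J‖ − 1 ≤ δ, ‖Ĵ‖ = 1,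 and the estimates ‖(id_{H₁} − Ĵ* ∘ Ĵ) ∘ R₁‖ ≤ δ̂, ‖(id_{H₂} − Ĵ ∘ Ĵ*) ∘ R₂‖ ≤ δ̂ and ‖Ĵ ∘ R₁ − R₂ ∘ Ĵ‖ ≤ δ̂ hold. (One can always replace an identification operator of norm ≥ 1 by a contraction at the cost of a controlled loss δ ↦ δ̂ of order O(δ).) -/
open ContinuousLinearMap

/-- Shrinking `A` by the factor `a⁻² ≤ 1` worsens a bound on `(id - A) ∘ R` by at most
`(a² - 1) * ‖R‖`, provided `‖A‖ ≤ a²`. -/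
theorem norm_id_sub_inv_sq_smul_comp_le {H : Type*} [NormedAddCommGroup H] [NormedSpace ℂ H]
    (A R : H →L[ℂ] H) {a δ : ℝ} (ha : 1 ≤ a) (hA : ‖A‖ ≤ a ^ 2)
    (h : ‖(ContinuousLinearMap.id ℂ H - A) ∘L R‖ ≤ δ) :
    ‖(ContinuousLinearMap.id ℂ H - (a⁻¹ ^ 2) • A) ∘L R‖ ≤ δ + (a ^ 2 - 1) * ‖R‖ := by
  have hc : 0 ≤ 1 - a⁻¹ ^ 2 :=
    sub_nonneg.2 (pow_le_one₀ (by positivity) (inv_le_one_of_one_le₀ ha))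
  have key : (ContinuousLinearMap.id ℂ H - (a⁻¹ ^ 2) • A) ∘L R =
      (ContinuousLinearMap.id ℂ H - A) ∘L R + (1 - a⁻¹ ^ 2) • (A ∘L R) := by
    ext x
    simp [sub_smul]
  calc
    _ ≤ ‖(ContinuousLinearMap.id ℂ H - A) ∘L R‖ + ‖(1 - a⁻¹ ^ 2) • (A ∘L R)‖ :=
      key ▸ norm_add_le _ _
    _ ≤ δ + (1 - a⁻¹ ^ 2) * (a ^ 2 * ‖R‖) := by
      rw [norm_smul, Real.norm_of_nonneg hc]
      gcongr
      exact (opNorm_comp_le A R).trans (by gcongr)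
    _ = δ + (a ^ 2 - 1) * ‖R‖ := by
      have : a ≠ 0 := by positivity
      field_simp

/-- An identification operator of norm at least `1` can be replaced by the rescaled
contraction `Ĵ = ‖J‖⁻¹ • J` at the cost of a controlled loss `δ ↦ δ̂` of order `O(δ)`
in the quasi-unitary-equivalence estimates. -/
theorem rescaled_identification_operator {H₁ H₂ : Type*}
    [NormedAddCommGroup H₁] [InnerProductSpace ℂ H₁] [CompleteSpace H₁]
    [NormedAddCommGroup H₂] [InnerProductSpace ℂ H₂] [CompleteSpace H₂]
    (R₁ : H₁ →L[ℂ] H₁) (R₂ : H₂ →L[ℂ] H₂) (δ : ℝ) (hδ : 0 ≤ δ)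
    (J : H₁ →L[ℂ] H₂) (hJ1 : 1 ≤ ‖J‖) (hJ2 : ‖J‖ ≤ 1 + δ)
    (h₁ : ‖(ContinuousLinearMap.id ℂ H₁ - (adjoint J) ∘L J) ∘L R₁‖ ≤ δ)
    (h₂ : ‖(ContinuousLinearMap.id ℂ H₂ - J ∘L (adjoint J)) ∘L R₂‖ ≤ δ)
    (h₃ : ‖J ∘L R₁ - R₂ ∘L J‖ ≤ δ)
    (Jhat : H₁ →L[ℂ] H₂) (hJhat : Jhat = ‖J‖⁻¹ • J)
    (δhat : ℝ) (hδhat : δhat = δ * (1 + max ‖R₁‖ ‖R₂‖ * (2 + 3 * δ))) :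
    ‖J - Jhat‖ = ‖J‖ - 1 ∧ ‖J‖ - 1 ≤ δ ∧ ‖Jhat‖ = 1 ∧
    ‖(ContinuousLinearMap.id ℂ H₁ - (adjoint Jhat) ∘L Jhat) ∘L R₁‖ ≤ δhat ∧
    ‖(ContinuousLinearMap.id ℂ H₂ - Jhat ∘L (adjoint Jhat)) ∘L R₂‖ ≤ δhat ∧
    ‖Jhat ∘L R₁ - R₂ ∘L Jhat‖ ≤ δhat := by
  subst hJhat hδhat
  have hpos : 0 < ‖J‖ := by positivity
  have hinv : ‖J‖⁻¹ ≤ 1 := inv_le_one_of_one_le₀ hJ1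
  have hadj : adjoint (‖J‖⁻¹ • J) = ‖J‖⁻¹ • adjoint J := by
    rw [← Complex.coe_smul, map_smulₛₗ, Complex.conj_ofReal, Complex.coe_smul]
  have hnorm : ‖adjoint J‖ = ‖J‖ := adjoint.norm_map J
  have hbound : ∀ r, 0 ≤ r → r ≤ max ‖R₁‖ ‖R₂‖ →
      δ + (‖J‖ ^ 2 - 1) * r ≤ δ * (1 + max ‖R₁‖ ‖R₂‖ * (2 + 3 * δ)) := by
    intro r hr hrm
    have hsq : ‖J‖ ^ 2 - 1 ≤ δ * (2 + 3 * δ) := by nlinarith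
    calc
      _ ≤ δ + δ * (2 + 3 * δ) * max ‖R₁‖ ‖R₂‖ := by gcongr
      _ = _ := by ring
  refine ⟨?_, by linarith, ?_, ?_, ?_, ?_⟩
  · have : J - ‖J‖⁻¹ • J = (1 - ‖J‖⁻¹) • J := by rw [sub_smul, one_smul]
    rw [this, norm_smul, Real.norm_of_nonneg (sub_nonneg.2 hinv), sub_mul, one_mul,
      inv_mul_cancel₀ hpos.ne']
  · rw [norm_smul, norm_inv, norm_norm, inv_mul_cancel₀ hpos.ne']
  · have hcomp : (‖J‖⁻¹ • adjoint J) ∘L (‖J‖⁻¹ • J) = (‖J‖⁻¹ ^ 2) • (adjoint J ∘L J) := by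
      rw [smul_comp, comp_smul, smul_smul, sq]
    rw [hadj, hcomp]
    refine (norm_id_sub_inv_sq_smul_comp_le _ R₁ hJ1 ?_ h₁).trans
      (hbound _ (norm_nonneg _) (le_max_left _ _))
    exact (opNorm_comp_le _ _).trans_eq (by rw [hnorm, sq])
  · have hcomp : (‖J‖⁻¹ • J) ∘L (‖J‖⁻¹ • adjoint J) = (‖J‖⁻¹ ^ 2) • (J ∘L adjoint J) := by
      rw [smul_comp, comp_smul, smul_smul, sq]
    rw [hadj, hcomp]
    refine (norm_id_sub_inv_sq_smul_comp_le _ R₂ hJ1 ?_ h₂).trans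
      (hbound _ (norm_nonneg _) (le_max_right _ _))
    exact (opNorm_comp_le _ _).trans_eq (by rw [hnorm, sq])
  · have hcomm : (‖J‖⁻¹ • J) ∘L R₁ - R₂ ∘L (‖J‖⁻¹ • J) = ‖J‖⁻¹ • (J ∘L R₁ - R₂ ∘L J) := by
      rw [smul_comp, comp_smul, smul_sub]
    rw [hcomm, norm_smul, norm_inv, norm_norm]
    calc
      _ ≤ 1 * δ := by gcongr
      _ ≤ δ + (‖J‖ ^ 2 - 1) * 0 := by simp
      _ ≤ _ := hbound 0 le_rfl (le_max_of_le_left (norm_nonneg _))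
end
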